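/- For every ε > 0 there exists K > 0 such that for all λ ≥ K, all μ ≥ Kλ, and every solution (u, N) of the Maxwell–Chern–Simons vortex equations with parameters λ, μ, one has sup_{x ∈ ℝ²} |e^{u(x)} − N(x)/λ| ≤ ε (with e^u extended continuously by 0 on Z + Λ). -/

import Mathlib

/-!
Write `v = e^u` (zero at the vortices). The maximum principle gives `0 ≤ N ≤ λ` (`N_nonneg`, `N_le`)
and `λv ≤ N` (`expu_le_N`), hence `v ≤ 1`. One half of the estimate, `v ≤ N / λ`, is therefore exact,
and the point is to bound `N / λ` by `v + ε`.

The equation for `N` has zeroth-order coefficient of size `μ²`, so `N` averages its source only over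
distances of order `1 / μ`. A quadratic barrier makes this quantitative (`N_le_of_expu_le`): at
`x₀`, `N / λ` is at most the supremum of `v` over the disc of radius `ρ`, plus
`λ / μ + 4 / (ρμ)²`. The function `u`, by contrast, has Laplacian of size `λμ` and varies on the scale
`r = (λμ)^(-1/2)`. When `μ / λ` is large, `r` is much larger than `1 / μ`, so `ρ` can be taken to be a
small fixed multiple of `r`. What remains is that `v` rises by at most `ε / 2` from `x₀` to any point
of this disc, uniformly in the solution (`expu_le_ball`).

* Near a vortex `p`, comparison of `u` with `log |x - p|` gives `v ≤ 3|x - p| / r`, so `v` itself is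
  small (`expu_le_vortex`). This needs `r` below the distance between vortices, hence `λμ` large.
* At distance at least `σr` from all vortices, `h = -u` satisfies `h ≥ 0` and `0 ≤ Δh ≤ λμ`. Weighted
  mean value inequalities over nearly equal discs give a Harnack inequality with constant close to
  `1` (`harnack`). Exponentiated, it bounds the increase of `v` even where `u` is very negative
  (`exp_harnack`, `expu_le_far`).
-/

open MeasureTheory Real Filter Metric Set

noncomputable section

/-- The plane `ℝ²`. -/
abbrev R2 : Type := EuclideanSpace ℝ (Fin 2)

/-- The Laplacian `Δf = ∂²f/∂x₁² + ∂²f/∂x₂²`. -/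
def lap (f : R2 → ℝ) (x : R2) : ℝ :=
  ∑ i : Fin 2,
    fderiv ℝ (fun y => fderiv ℝ f y (EuclideanSpace.single i 1)) x (EuclideanSpace.single i 1)

/-- The lattice `Λ = ℤa₁ + ℤa₂`. -/
def lattice (a1 a2 : R2) : Set R2 := {x | ∃ k l : ℤ, x = (k : ℝ) • a1 + (l : ℝ) • a2}

/-- The fundamental cell `Ω = {t₁a₁ + t₂a₂ : 0 < t₁, t₂ < 1}`. -/
def cell (a1 a2 : R2) : Set R2 :=
  {x | ∃ t1 t2 : ℝ, t1 ∈ Set.Ioo (0:ℝ) 1 ∧ t2 ∈ Set.Ioo (0:ℝ) 1 ∧ x = t1 • a1 + t2 • a2}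

/-- `Λ`-periodicity of a function on `ℝ²`. -/
def Periodic2 (a1 a2 : R2) (f : R2 → ℝ) : Prop :=
  ∀ x : R2, ∀ w ∈ lattice a1 a2, f (x + w) = f x

/-- The torus and vortex data: a lattice with fundamental cell of area 1, and distinct
vortex points `p₁, …, pₙ ∈ Ω` with positive multiplicities `m₁, …, mₙ`. -/
structure VortexData where
  a1 : R2
  a2 : R2
  indep : LinearIndependent ℝ ![a1, a2]
  area_one : volume (cell a1 a2) = 1
  n : ℕ
  p : Fin n → R2
  m : Fin n → ℕ
  m_pos : ∀ i, 0 < m i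
  p_mem : ∀ i, p i ∈ cell a1 a2
  p_inj : Function.Injective p

/-- The singular set `Z + Λ`. -/
def VortexData.sing (D : VortexData) : Set R2 :=
  {x | ∃ i : Fin D.n, ∃ w ∈ lattice D.a1 D.a2, x = D.p i + w}

/-- The total vortex number `𝔐 = Σᵢ mᵢ`. -/
def VortexData.M (D : VortexData) : ℝ := ∑ i, (D.m i : ℝ)

open Classical in
/-- `e^u`, extended continuously by the value `0` on `Z + Λ`. -/
def VortexData.expu (D : VortexData) (u : R2 → ℝ) (x : R2) : ℝ :=
  if x ∈ D.sing then 0 else Real.exp (u x)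

/-- `(u, N)` is a solution of the Maxwell–Chern–Simons vortex equations with
parameters `λ, μ`:  `u`, `N` are `Λ`-periodic, `u` is smooth away from `Z + Λ` with the
prescribed logarithmic behaviour `u(x) = 2mᵢ ln|x − pᵢ| + smooth` near each vortex point,
`N` is smooth, and the equations `Δu = λμ eᵘ − μN` (away from `Z + Λ`) and
`ΔN = μ(μ + λeᵘ)N − λμ(μ + λ)eᵘ` (everywhere, with `eᵘ` extended by `0` on `Z + Λ`)
hold pointwise. -/
def IsMCSSolution (D : VortexData) (lam mu : ℝ) (u N : R2 → ℝ) : Prop :=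
  Periodic2 D.a1 D.a2 u ∧ Periodic2 D.a1 D.a2 N ∧
  ContDiffOn ℝ (⊤ : ℕ∞) u D.singᶜ ∧ ContDiff ℝ (⊤ : ℕ∞) N ∧
  (∀ i : Fin D.n, ∃ ε > (0:ℝ), ∃ v : R2 → ℝ, ContDiffOn ℝ (⊤ : ℕ∞) v (Metric.ball (D.p i) ε) ∧
    ∀ x ∈ Metric.ball (D.p i) ε, x ≠ D.p i →
      u x = v x + 2 * (D.m i : ℝ) * Real.log ‖x - D.p i‖) ∧
  (∀ x ∉ D.sing, lap u x = lam * mu * Real.exp (u x) - mu * N x) ∧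
  (∀ x : R2, lap N x = mu * (mu + lam * D.expu u x) * N x - lam * mu * (mu + lam) * D.expu u x)

/-! ### Calculus of the Laplacian -/

/-- The standard basis vectors of the plane. -/
def stdE (i : Fin 2) : R2 := EuclideanSpace.single i 1

theorem lap_def (f : R2 → ℝ) (x : R2) :
    lap f x = ∑ i : Fin 2, fderiv ℝ (fun y => fderiv ℝ f y (stdE i)) x (stdE i) := rfl

theorem norm_stdE (i : Fin 2) : ‖stdE i‖ = 1 := by simp [stdE]

theorem inner_stdE (x : R2) (i : Fin 2) : inner ℝ x (stdE i) = x i := by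
  simp [stdE, EuclideanSpace.inner_single_right]

/-- Computing the Laplacian from formulas for the first partial derivatives near the point. -/
theorem lap_of_hasFDerivAt {f : R2 → ℝ} {x : R2} {g : Fin 2 → R2 → ℝ} {L : Fin 2 → R2 →L[ℝ] ℝ}
    (h : ∀ᶠ y in nhds x, ∀ i, fderiv ℝ f y (stdE i) = g i y)
    (h2 : ∀ i, HasFDerivAt (g i) (L i) x) : lap f x = ∑ i, L i (stdE i) := by
  rw [lap_def]
  refine Finset.sum_congr rfl fun i _ => ?_
  have : (fun y => fderiv ℝ f y (stdE i)) =ᶠ[nhds x] g i := h.mono fun y hy => hy i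
  rw [this.fderiv_eq, (h2 i).fderiv]

theorem eventually_differentiableAt {f : R2 → ℝ} {x : R2} (hf : ContDiffAt ℝ 2 f x) :
    ∀ᶠ y in nhds x, DifferentiableAt ℝ f y :=
  (hf.eventually (by simp)).mono fun _ hy => hy.differentiableAt (by simp)

theorem differentiableAt_partial {f : R2 → ℝ} {x : R2} (hf : ContDiffAt ℝ 2 f x) (i : Fin 2) :
    DifferentiableAt ℝ (fun y => fderiv ℝ f y (stdE i)) x :=
  ((hf.fderiv_right (m := 1) (by norm_num)).differentiableAt (by simp)).clm_apply
    (differentiableAt_const _)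

theorem lap_congr {f g : R2 → ℝ} {x : R2} (h : f =ᶠ[nhds x] g) : lap f x = lap g x := by
  rw [lap_def, lap_def]
  refine Finset.sum_congr rfl fun i _ => ?_
  have : (fun y => fderiv ℝ f y (stdE i)) =ᶠ[nhds x] fun y => fderiv ℝ g y (stdE i) :=
    h.eventuallyEq_nhds.mono fun y hy => by simp only [hy.fderiv_eq]
  rw [this.fderiv_eq]

theorem lap_add {f g : R2 → ℝ} {x : R2} (hf : ContDiffAt ℝ 2 f x) (hg : ContDiffAt ℝ 2 g x) :
    lap (fun y => f y + g y) x = lap f x + lap g x := by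
  rw [lap_of_hasFDerivAt (g := fun i y => fderiv ℝ f y (stdE i) + fderiv ℝ g y (stdE i)) ?_
    fun i => (differentiableAt_partial hf i).hasFDerivAt.add
      (differentiableAt_partial hg i).hasFDerivAt]
  · simp [lap_def, Finset.sum_add_distrib]
  · filter_upwards [eventually_differentiableAt hf, eventually_differentiableAt hg] with y h1 h2 i
    rw [fderiv_fun_add h1 h2]; rfl

theorem lap_const_mul {f : R2 → ℝ} {x : R2} (hf : ContDiffAt ℝ 2 f x) (c : ℝ) :
    lap (fun y => c * f y) x = c * lap f x := by
  rw [lap_of_hasFDerivAt (g := fun i y => c * fderiv ℝ f y (stdE i)) ?_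
    fun i => (differentiableAt_partial hf i).hasFDerivAt.const_mul c]
  · simp [lap_def, mul_add]
  · filter_upwards [eventually_differentiableAt hf] with y h1 i
    rw [fderiv_const_mul h1]; rfl

theorem lap_sub {f g : R2 → ℝ} {x : R2} (hf : ContDiffAt ℝ 2 f x) (hg : ContDiffAt ℝ 2 g x) :
    lap (fun y => f y - g y) x = lap f x - lap g x := by
  have h := lap_add hf (contDiffAt_const.mul hg : ContDiffAt ℝ 2 (fun y => (-1 : ℝ) * g y) x)
  rw [lap_const_mul hg] at h
  have e : (fun y => f y - g y) = fun y => f y + -1 * g y := by ext; ring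
  rw [e, h]; ring

/-- The chain rule `Δeᶠ = eᶠ(Δf + |∇f|²)`. -/
theorem lap_exp {f : R2 → ℝ} {x : R2} (hf : ContDiffAt ℝ 2 f x) :
    lap (fun y => Real.exp (f y)) x
      = Real.exp (f x) * (lap f x + ∑ i, (fderiv ℝ f x (stdE i)) ^ 2) := by
  rw [lap_of_hasFDerivAt (g := fun i y => Real.exp (f y) * fderiv ℝ f y (stdE i)) ?_
    fun i => (hf.differentiableAt (by simp)).hasFDerivAt.exp.mul
      (differentiableAt_partial hf i).hasFDerivAt]
  · simp [lap_def]; ring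
  · filter_upwards [eventually_differentiableAt hf] with y h1 i
    rw [fderiv_exp h1]; rfl

theorem hasFDerivAt_norm_sub_sq (p x : R2) :
    HasFDerivAt (fun y : R2 => ‖y - p‖ ^ 2) ((2 : ℝ) • innerSL ℝ (x - p)) x := by
  have h := ((hasFDerivAt_id x).sub_const p).norm_sq
  simpa [two_smul] using h

theorem hasFDerivAt_coord (p x : R2) (i : Fin 2) :
    HasFDerivAt (fun y : R2 => (y - p) i) (EuclideanSpace.proj i : R2 →L[ℝ] ℝ) x := by
  simpa using ((EuclideanSpace.proj i : R2 →L[ℝ] ℝ).hasFDerivAt (x := x)).sub_const (p i)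

theorem proj_stdE (i : Fin 2) : (EuclideanSpace.proj i : R2 →L[ℝ] ℝ) (stdE i) = 1 := by
  simp [stdE]

theorem contDiff_norm_sub_sq (p : R2) : ContDiff ℝ 2 (fun y : R2 => ‖y - p‖ ^ 2) :=
  (contDiff_id.sub contDiff_const).norm_sq ℝ

theorem lap_norm_sub_sq (p x : R2) : lap (fun y : R2 => ‖y - p‖ ^ 2) x = 4 := by
  rw [lap_of_hasFDerivAt (g := fun i y => 2 * (y - p) i) ?_
    fun i => (hasFDerivAt_coord p x i).const_mul 2]
  · simp [stdE]; norm_num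
  · refine Eventually.of_forall fun y i => ?_
    rw [(hasFDerivAt_norm_sub_sq p y).fderiv]
    simp [inner_stdE]

theorem contDiffAt_log_norm {p x : R2} (hx : x ≠ p) :
    ContDiffAt ℝ 2 (fun y : R2 => Real.log ‖y - p‖) x :=
  ((contDiff_id.sub contDiff_const).contDiffAt.norm ℝ (sub_ne_zero.2 hx)).log
    (norm_ne_zero_iff.2 (sub_ne_zero.2 hx))

/-- The logarithm is harmonic off its pole. -/
theorem lap_log_norm {p x : R2} (hx : x ≠ p) :
    lap (fun y : R2 => Real.log ‖y - p‖) x = 0 := by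
  have hne : ∀ y : R2, y ≠ p → ‖y - p‖ ^ 2 ≠ 0 := fun y hy =>
    pow_ne_zero 2 (norm_ne_zero_iff.2 (sub_ne_zero.2 hy))
  rw [lap_of_hasFDerivAt (g := fun i y => (y - p) i * (‖y - p‖ ^ 2)⁻¹) ?_
    fun i => (hasFDerivAt_coord p x i).mul
      ((hasDerivAt_inv (hne x hx)).comp_hasFDerivAt x (hasFDerivAt_norm_sub_sq p x))]
  · have h := EuclideanSpace.real_norm_sq_eq (x - p)
    have h0 := hne x hx
    simp only [Fin.sum_univ_two, add_apply, smul_apply, innerSL_apply_apply, inner_stdE,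
      smul_eq_mul, proj_stdE] at h ⊢
    field_simp
    rw [h]; ring
  · filter_upwards [isOpen_ne.mem_nhds hx] with y hy i
    have e : (fun y : R2 => Real.log ‖y - p‖) = fun y => 2⁻¹ * Real.log (‖y - p‖ ^ 2) := by
      ext y; rw [Real.log_pow]; push_cast; ring
    rw [e, (((hasFDerivAt_norm_sub_sq p y).log (hne y hy)).const_mul 2⁻¹).fderiv]
    simp [inner_stdE]; ring

/-- The second-derivative test: the Laplacian is nonpositive at a local maximum. -/
theorem lap_nonpos_of_isLocalMax {f : R2 → ℝ} {x : R2} (hf : ContDiffAt ℝ 2 f x)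
    (hm : IsLocalMax f x) : lap f x ≤ 0 := by
  rw [lap_def]
  refine Finset.sum_nonpos fun i _ => ?_
  by_contra! hpos
  -- restrict to the line through `x` in the direction of the `i`-th basis vector
  set l : ℝ → R2 := fun t => x + t • stdE i with hl
  have hl0 : l 0 = x := by simp [hl]
  have hld : ∀ t, HasDerivAt l (stdE i) t := fun t => by
    simpa [hl] using ((hasDerivAt_id t).smul_const (stdE i)).const_add x
  have hlc : Tendsto l (nhds 0) (nhds x) := by
    simpa [hl0] using (hld 0).continuousAt.tendsto
  have h1 : ∀ᶠ t in nhds (0 : ℝ), deriv (fun t => f (l t)) t = fderiv ℝ f (l t) (stdE i) := by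
    filter_upwards [hlc.eventually (eventually_differentiableAt hf)] with t ht
    exact (ht.hasFDerivAt.comp_hasDerivAt t (hld t)).deriv
  have h2 : deriv (deriv fun t => f (l t)) 0
      = fderiv ℝ (fun y => fderiv ℝ f y (stdE i)) x (stdE i) := by
    rw [EventuallyEq.deriv_eq h1]
    have := (differentiableAt_partial hf i).hasFDerivAt
    rw [← hl0] at this
    rw [← hl0]
    exact (this.comp_hasDerivAt (0 : ℝ) (hld 0)).deriv
  have hm' : IsLocalMax (fun t => f (l t)) 0 := by
    have := hlc.eventually hm
    filter_upwards [this] with t ht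
    simpa [hl0] using ht
  have hcont : ContinuousAt (fun t => f (l t)) 0 := by
    have h := hf.continuousAt
    rw [← hl0] at h
    exact h.comp (hld 0).continuousAt
  have hmin : IsLocalMin (fun t => f (l t)) 0 :=
    isLocalMin_of_deriv_deriv_pos (h2 ▸ hpos) hm'.deriv_eq_zero hcont
  -- both a local maximum and a local minimum: locally constant, so the second derivative vanishes
  have hconst : (fun t => f (l t)) =ᶠ[nhds 0] fun _ => f (l 0) := by
    filter_upwards [hm', hmin] with t ht1 ht2 using le_antisymm ht1 ht2
  have : deriv (deriv fun t => f (l t)) 0 = 0 := by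
    rw [hconst.deriv.deriv_eq]; simp
  rw [h2] at this
  exact hpos.ne' this

/-! ### Weighted mean value inequalities -/

/-- The radial weight `(1 - |y|²)₊` used for averaging over balls. -/
def wt (y : R2) : ℝ := max (1 - ‖y‖ ^ 2) 0

/-- A potential of the weight: `∇(wtPot) (y) = -wt y • y`. -/
def wtPot (y : R2) : ℝ := (max (1 - ‖y‖ ^ 2) 0) ^ 2 / 4

theorem wt_nonneg (y : R2) : 0 ≤ wt y := le_max_right _ _

theorem wtPot_nonneg (y : R2) : 0 ≤ wtPot y := by unfold wtPot; positivity

theorem wtPot_le (y : R2) : wtPot y ≤ wt y / 4 := by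
  unfold wtPot wt
  have h0 : 0 ≤ max (1 - ‖y‖ ^ 2) 0 := le_max_right _ _
  have h1 : max (1 - ‖y‖ ^ 2) 0 ≤ 1 := max_le (by nlinarith [sq_nonneg ‖y‖]) zero_le_one
  nlinarith

theorem wt_eq_zero {y : R2} (hy : 1 ≤ ‖y‖) : wt y = 0 :=
  max_eq_right (by nlinarith)

theorem wtPot_eq_zero {y : R2} (hy : 1 ≤ ‖y‖) : wtPot y = 0 := by
  have : max (1 - ‖y‖ ^ 2) 0 = 0 := wt_eq_zero hy
  rw [wtPot, this]; norm_num

theorem continuous_wt : Continuous wt := by unfold wt; fun_prop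

theorem continuous_wtPot : Continuous wtPot := by unfold wtPot; fun_prop

theorem hasCompactSupport_wt : HasCompactSupport wt :=
  HasCompactSupport.intro (isCompact_closedBall 0 1) fun y hy =>
    wt_eq_zero (by simp at hy; exact hy.le)

theorem hasCompactSupport_wtPot : HasCompactSupport wtPot :=
  HasCompactSupport.intro (isCompact_closedBall 0 1) fun y hy =>
    wtPot_eq_zero (by simp at hy; exact hy.le)

theorem integrable_mul_wt {g : R2 → ℝ} (hg : Continuous g) : Integrable fun y => g y * wt y :=
  (hg.mul continuous_wt).integrable_of_hasCompactSupport hasCompactSupport_wt.mul_left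

theorem integrable_mul_wtPot {g : R2 → ℝ} (hg : Continuous g) :
    Integrable fun y => g y * wtPot y :=
  (hg.mul continuous_wtPot).integrable_of_hasCompactSupport hasCompactSupport_wtPot.mul_left

theorem integrable_wt : Integrable wt :=
  continuous_wt.integrable_of_hasCompactSupport hasCompactSupport_wt

theorem integral_wt_pos : 0 < ∫ y, wt y := by
  refine continuous_wt.integral_pos_of_hasCompactSupport_nonneg_nonzero hasCompactSupport_wt
    wt_nonneg (x := 0) ?_
  simp [wt]

theorem hasDerivAt_sq_max (s : ℝ) : HasDerivAt (fun s : ℝ => (max s 0) ^ 2) (2 * max s 0) s := by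
  rcases lt_trichotomy s 0 with h | h | h
  · have e : (fun s : ℝ => (max s 0) ^ 2) =ᶠ[nhds s] fun _ => 0 := by
      filter_upwards [isOpen_Iio.mem_nhds h] with y hy
      rw [max_eq_right (le_of_lt hy)]; norm_num
    rw [max_eq_right h.le, mul_zero]
    exact (hasDerivAt_const s (0 : ℝ)).congr_of_eventuallyEq e
  · subst h
    rw [hasDerivAt_iff_isLittleO_nhds_zero]
    have h2 : (fun h : ℝ => h ^ 2) =o[nhds 0] fun h : ℝ => h := by
      simpa using Asymptotics.isLittleO_pow_pow (𝕜 := ℝ) (m := 1) (n := 2) (by norm_num)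
    refine (Asymptotics.IsBigO.of_bound 1 (Eventually.of_forall fun y => ?_)).trans_isLittleO h2
    simp only [zero_add, max_self, Real.norm_eq_abs, smul_eq_mul]
    rcases le_total y 0 with hy | hy
    · rw [max_eq_right hy]; simp; positivity
    · rw [max_eq_left hy]; simp
  · have e : (fun s : ℝ => (max s 0) ^ 2) =ᶠ[nhds s] fun s => s ^ 2 := by
      filter_upwards [isOpen_Ioi.mem_nhds h] with y hy
      rw [max_eq_left (le_of_lt hy)]
    rw [max_eq_left h.le]
    simpa using (hasDerivAt_pow 2 s).congr_of_eventuallyEq e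

theorem hasFDerivAt_wtPot (y : R2) : HasFDerivAt wtPot (-(wt y) • innerSL ℝ y) y := by
  have h1 : HasFDerivAt (fun y : R2 => 1 - ‖y‖ ^ 2) (-((2 : ℝ) • innerSL ℝ y)) y := by
    simpa using (hasFDerivAt_norm_sub_sq 0 y).const_sub 1
  have h := ((hasDerivAt_sq_max (1 - ‖y‖ ^ 2)).comp_hasFDerivAt y h1).const_mul (4⁻¹)
  have e : wtPot = fun y => 4⁻¹ * (fun s : ℝ => (max s 0) ^ 2) (1 - ‖y‖ ^ 2) := by
    ext y; simp only [wtPot]; ring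
  rw [e]
  refine h.congr_fderiv ?_
  ext v
  simp [wt]; ring

theorem contDiff_partial {f : R2 → ℝ} (hf : ContDiff ℝ 2 f) (v : R2) :
    ContDiff ℝ 1 fun y => fderiv ℝ f y v :=
  (hf.fderiv_right (m := 1) (by norm_num)).clm_apply contDiff_const

theorem continuous_lap {f : R2 → ℝ} (hf : ContDiff ℝ 2 f) : Continuous (lap f) := by
  have : lap f = fun x => ∑ i, fderiv ℝ (fun y => fderiv ℝ f y (stdE i)) x (stdE i) := by
    ext x; exact lap_def f x
  rw [this]
  exact continuous_finsetSum _ fun i _ =>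
    ((contDiff_partial hf (stdE i)).continuous_fderiv (by simp)).clm_apply continuous_const

/-- Integration by parts turns the radial derivative of `f` against the weight into its Laplacian
against the potential of the weight. -/
theorem integral_radial {f : R2 → ℝ} (hf : ContDiff ℝ 2 f) (x : R2) (t : ℝ) :
    ∫ y, fderiv ℝ f (x + t • y) y * wt y = t * ∫ y, lap f (x + t • y) * wtPot y := by
  have hc : Continuous fun y : R2 => x + t • y := by fun_prop
  have hfc : ∀ i, Continuous fun y => fderiv ℝ f (x + t • y) (stdE i) := fun i =>
    (contDiff_partial hf (stdE i)).continuous.comp hc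
  have hfc2 : ∀ i, Continuous fun y =>
      fderiv ℝ (fun z => fderiv ℝ f z (stdE i)) (x + t • y) (stdE i) := fun i =>
    (((contDiff_partial hf (stdE i)).continuous_fderiv (by simp)).clm_apply
      continuous_const).comp hc
  have hpt : ∀ i y, HasFDerivAt (fun y => fderiv ℝ f (x + t • y) (stdE i))
      (t • fderiv ℝ (fun z => fderiv ℝ f z (stdE i)) (x + t • y)) y := by
    intro i y
    have h1 := ((contDiff_partial hf (stdE i)).differentiable (by simp)
      (x + t • y)).hasFDerivAt
    have h2 : HasFDerivAt (fun y : R2 => x + t • y) (t • ContinuousLinearMap.id ℝ R2) y :=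
      ((hasFDerivAt_id y).const_smul t).const_add x
    refine (h1.comp y h2).congr_fderiv ?_
    ext v; simp
  have hpot : ∀ i y, fderiv ℝ wtPot y (stdE i) = -(wt y * y i) := by
    intro i y
    rw [(hasFDerivAt_wtPot y).fderiv]; simp [inner_stdE]
  have key : ∀ i, ∫ y, fderiv ℝ f (x + t • y) (stdE i) * fderiv ℝ wtPot y (stdE i)
      = - ∫ y, (t * fderiv ℝ (fun z => fderiv ℝ f z (stdE i)) (x + t • y) (stdE i)) * wtPot y := by
    intro i
    have e : ∀ y, fderiv ℝ (fun y => fderiv ℝ f (x + t • y) (stdE i)) y (stdE i)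
        = t * fderiv ℝ (fun z => fderiv ℝ f z (stdE i)) (x + t • y) (stdE i) := by
      intro y; rw [(hpt i y).fderiv]; simp
    rw [integral_mul_fderiv_eq_neg_fderiv_mul_of_integrable]
    · simp_rw [e]
    · simp_rw [e]
      exact integrable_mul_wtPot (continuous_const.mul (hfc2 i))
    · have : (fun y => fderiv ℝ f (x + t • y) (stdE i) * fderiv ℝ wtPot y (stdE i))
          = fun y => (fderiv ℝ f (x + t • y) (stdE i) * (-(y i))) * wt y := by
        ext y; rw [hpot]; ring
      rw [this]
      refine integrable_mul_wt ((hfc i).mul ?_)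
      fun_prop
    · exact integrable_mul_wtPot (hfc i)
    · exact fun y _ => (hpt i y).differentiableAt
    · exact fun y _ => (hasFDerivAt_wtPot y).differentiableAt
  have hdec : ∀ y : R2, y = y 0 • stdE 0 + y 1 • stdE 1 := by
    intro y; ext i; fin_cases i <;> simp [stdE]
  have e1 : (fun y => fderiv ℝ f (x + t • y) y * wt y) = fun y =>
      -(fderiv ℝ f (x + t • y) (stdE 0) * fderiv ℝ wtPot y (stdE 0))
      - (fderiv ℝ f (x + t • y) (stdE 1) * fderiv ℝ wtPot y (stdE 1)) := by
    ext y
    rw [hpot, hpot]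
    conv_lhs => rw [hdec y]
    rw [map_add, map_smul, map_smul, ← hdec y]
    simp only [smul_eq_mul]; ring
  have hint : ∀ i, Integrable fun y =>
      fderiv ℝ f (x + t • y) (stdE i) * fderiv ℝ wtPot y (stdE i) := by
    intro i
    have : (fun y => fderiv ℝ f (x + t • y) (stdE i) * fderiv ℝ wtPot y (stdE i))
          = fun y => (fderiv ℝ f (x + t • y) (stdE i) * (-(y i))) * wt y := by
        ext y; rw [hpot]; ring
    rw [this]
    refine integrable_mul_wt ((hfc i).mul ?_)
    fun_prop
  have hneg : Integrable fun y =>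
      -(fderiv ℝ f (x + t • y) (stdE 0) * fderiv ℝ wtPot y (stdE 0)) := (hint 0).neg
  rw [e1, integral_sub hneg (hint 1), integral_neg, key, key]
  have hI : ∀ i, Integrable fun y =>
      (t * fderiv ℝ (fun z => fderiv ℝ f z (stdE i)) (x + t • y) (stdE i)) * wtPot y := fun i =>
    integrable_mul_wtPot (continuous_const.mul (hfc2 i))
  rw [neg_neg, sub_neg_eq_add, ← integral_add (hI 0) (hI 1), ← integral_const_mul]
  refine integral_congr_ae (Eventually.of_forall fun y => ?_)
  simp only [lap_def, Fin.sum_univ_two]; ring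

/-- The derivative in the radius of the weighted average of `f` over discs about `x`. -/
theorem hasDerivAt_mean {f : R2 → ℝ} (hf : ContDiff ℝ 2 f) (x : R2) (t : ℝ) :
    HasDerivAt (fun t : ℝ => ∫ y, f (x + t • y) * wt y)
      (t * ∫ y, lap f (x + t • y) * wtPot y) t := by
  rw [← integral_radial hf]
  have hcont : Continuous fun q : ℝ × R2 => fderiv ℝ f (x + q.1 • q.2) q.2 :=
    ((hf.continuous_fderiv (by simp)).comp (by fun_prop)).clm_apply continuous_snd
  obtain ⟨C, hC⟩ := ((isCompact_closedBall t 1).prod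
    (isCompact_closedBall (0 : R2) 1)).exists_bound_of_continuousOn hcont.continuousOn
  have hF' : ∀ t : ℝ, Continuous fun y : R2 => fderiv ℝ f (x + t • y) y := fun t =>
    hcont.comp (by fun_prop : Continuous fun y : R2 => (t, y))
  have hF : ∀ t : ℝ, Continuous fun y : R2 => f (x + t • y) := fun t =>
    hf.continuous.comp (by fun_prop)
  refine (hasDerivAt_integral_of_dominated_loc_of_deriv_le
    (F := fun t y => f (x + t • y) * wt y)
    (F' := fun t y => fderiv ℝ f (x + t • y) y * wt y) (bound := fun y => C * wt y)
    (s := closedBall t 1) (closedBall_mem_nhds t one_pos) ?_ ?_ ?_ ?_ ?_ ?_).2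
  · exact Eventually.of_forall fun t => (integrable_mul_wt (hF t)).aestronglyMeasurable
  · exact integrable_mul_wt (hF t)
  · exact (integrable_mul_wt (hF' t)).aestronglyMeasurable
  · refine Eventually.of_forall fun y s hs => ?_
    rw [norm_mul, Real.norm_of_nonneg (wt_nonneg y)]
    by_cases hy : ‖y‖ ≤ 1
    · exact mul_le_mul_of_nonneg_right (hC (s, y) ⟨hs, by simpa using hy⟩) (wt_nonneg y)
    · rw [wt_eq_zero (le_of_not_ge hy)]; simp
  · exact integrable_wt.const_mul C
  · refine Eventually.of_forall fun y s _ => ?_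
    have h2 : HasDerivAt (fun s : ℝ => x + s • y) y s := by
      simpa using ((hasDerivAt_id s).smul_const y).const_add x
    exact ((hf.differentiable (by simp) (x + s • y)).hasFDerivAt.comp_hasDerivAt s h2).mul_const _

/-- One-sided mean value inequality for weighted averages over a disc. -/
theorem mean_le {f : R2 → ℝ} (hf : ContDiff ℝ 2 f) {x : R2} {T c : ℝ} (hT : 0 ≤ T) (hc : 0 ≤ c)
    (h : ∀ z ∈ closedBall x T, lap f z ≤ c) :
    ∫ y, f (x + T • y) * wt y ≤ (f x + c * T ^ 2 / 8) * ∫ y, wt y := by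
  set I := ∫ y, wt y with hI
  have hd : ∀ t, HasDerivAt (fun t : ℝ => (∫ y, f (x + t • y) * wt y) - c * t ^ 2 / 8 * I)
      (t * (∫ y, lap f (x + t • y) * wtPot y) - c * t / 4 * I) t := by
    intro t
    have h2 := ((((hasDerivAt_pow 2 t).const_mul c).div_const 8).mul_const I)
    refine ((hasDerivAt_mean hf x t).sub h2).congr_deriv ?_
    push_cast; ring
  have hanti : AntitoneOn (fun t : ℝ => (∫ y, f (x + t • y) * wt y) - c * t ^ 2 / 8 * I)
      (Icc 0 T) := by
    refine antitoneOn_of_deriv_nonpos (convex_Icc 0 T)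
      (fun t _ => (hd t).continuousAt.continuousWithinAt)
      (fun t _ => (hd t).differentiableAt.differentiableWithinAt) fun t ht => ?_
    rw [interior_Icc] at ht
    rw [(hd t).deriv]
    have hle : ∫ y, lap f (x + t • y) * wtPot y ≤ c / 4 * I := by
      rw [hI, ← integral_const_mul]
      refine integral_mono (integrable_mul_wtPot ((continuous_lap hf).comp (by fun_prop)))
        (integrable_wt.const_mul _) fun y => ?_
      by_cases hy : ‖y‖ ≤ 1
      · have hz : lap f (x + t • y) ≤ c := by
          refine h _ ?_
          rw [mem_closedBall, dist_eq_norm, add_sub_cancel_left, norm_smul,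
            Real.norm_of_nonneg ht.1.le]
          nlinarith [ht.1, ht.2, norm_nonneg y]
        have := mul_le_mul_of_nonneg_right hz (wtPot_nonneg y)
        have := mul_le_mul_of_nonneg_left (wtPot_le y) hc
        simp only; linarith
      · simp only
        rw [wt_eq_zero (le_of_not_ge hy), wtPot_eq_zero (le_of_not_ge hy)]; simp
    nlinarith [mul_le_mul_of_nonneg_left hle ht.1.le]
  have := hanti (left_mem_Icc.2 hT) (right_mem_Icc.2 hT) hT
  have h0 : ∫ y, f (x + (0 : ℝ) • y) * wt y = f x * I := by
    simp only [zero_smul, add_zero]; exact integral_const_mul _ _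
  simp only [h0] at this
  linarith

/-- Sub-mean value inequality for weighted averages of a subharmonic function. -/
theorem le_mean {f : R2 → ℝ} (hf : ContDiff ℝ 2 f) {x : R2} {T : ℝ} (hT : 0 ≤ T)
    (h : ∀ z ∈ closedBall x T, 0 ≤ lap f z) :
    f x * ∫ y, wt y ≤ ∫ y, f (x + T • y) * wt y := by
  have := mean_le (f := fun y => (-1) * f y) (contDiff_const.mul hf) hT le_rfl fun z hz => by
    rw [lap_const_mul hf.contDiffAt]; linarith [h z hz]
  have e : ∫ y, (fun y => (-1) * f y) (x + T • y) * wt y = -∫ y, f (x + T • y) * wt y := by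
    rw [← integral_neg]; congr 1; ext y; ring
  rw [e] at this
  linarith

/-! ### The Harnack inequality -/

/-- A Harnack inequality with constant close to one, for nonnegative subharmonic functions whose
Laplacian is at most `c`. The disc of radius `(1 + θ) s` about `x` contains the disc of radius `s`
about `x₀`, so the two weighted averages are comparable. -/
theorem harnack {h : R2 → ℝ} (hh : ContDiff ℝ 2 h) {x0 x : R2} {s θ c : ℝ} (hs : 0 < s)
    (hθ : 0 < θ) (hθ1 : θ ≤ 1) (hc : 0 ≤ c) (hx : ‖x - x0‖ ≤ θ * s)
    (hpos : ∀ z ∈ closedBall x0 (3 * s), 0 ≤ h z)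
    (hlap : ∀ z ∈ closedBall x0 (3 * s), 0 ≤ lap h z ∧ lap h z ≤ c) :
    ((1 + θ) ^ 4)⁻¹ * h x0 ≤ h x + c * s ^ 2 / 2 := by
  set I := ∫ y, wt y with hI
  have hI0 : 0 < I := integral_wt_pos
  set S := (1 + θ) * s with hS
  have hS0 : 0 < S := by positivity
  set k := (1 + θ)⁻¹ with hk
  have hk0 : 0 < k := by positivity
  have hk1 : k * (1 + θ) = 1 := by rw [hk]; field_simp
  have hSk : S * k = s := by rw [hS, hk]; field_simp
  have hsub : ∀ z, ‖z - x‖ ≤ S → z ∈ closedBall x0 (3 * s) := by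
    intro z hz
    rw [mem_closedBall, dist_eq_norm]
    have : ‖z - x0‖ ≤ ‖z - x‖ + ‖x - x0‖ := norm_sub_le_norm_sub_add_norm_sub z x x0
    nlinarith
  have hA : h x0 * I ≤ ∫ y, h (x0 + s • y) * wt y :=
    le_mean hh hs.le fun z hz => (hlap z (closedBall_subset_closedBall (by linarith) hz)).1
  have hB : ∫ y, h (x + S • y) * wt y ≤ (h x + c * S ^ 2 / 8) * I :=
    mean_le hh hS0.le hc fun z hz => (hlap z (hsub z (by simpa [dist_eq_norm] using hz))).2
  set a : R2 := S⁻¹ • (x0 - x) with ha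
  have ha1 : ‖a‖ ≤ θ * k := by
    rw [ha, norm_smul, norm_inv, Real.norm_of_nonneg hS0.le, norm_sub_rev,
      inv_mul_le_iff₀ hS0]
    calc ‖x - x0‖ ≤ θ * s := hx
      _ = S * (θ * k) := by rw [← hSk]; ring
  have hpt : ∀ y : R2, x + S • (k • y + a) = x0 + s • y := by
    intro y
    rw [smul_add, smul_smul, hSk, ha, smul_smul, mul_inv_cancel₀ hS0.ne', one_smul]; abel
  -- the affine substitution carrying the second average to the first disc
  have hBsub : ∫ y, h (x + S • y) * wt y = k ^ 2 * ∫ y, h (x0 + s • y) * wt (k • y + a) := by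
    set G : R2 → ℝ := fun y => h (x + S • y) * wt y with hG
    have e1 : ∫ y, G y = ∫ y, G (y + a) := (integral_add_right_eq_self G a).symm
    have e2 := Measure.integral_comp_smul (volume : Measure R2) (fun y => G (y + a)) k
    have e3 : ∀ y, G (k • y + a) = h (x0 + s • y) * wt (k • y + a) := fun y => by
      simp only [hG]; rw [hpt]
    simp only [e3, finrank_euclideanSpace, Fintype.card_fin, smul_eq_mul] at e2
    rw [e2, e1, abs_of_pos (by positivity), ← mul_assoc, mul_inv_cancel₀ (by positivity), one_mul]
  have hcmp : k ^ 2 * ∫ y, h (x0 + s • y) * wt y ≤ ∫ y, h (x0 + s • y) * wt (k • y + a) := by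
    rw [← integral_const_mul]
    have hcont : Continuous fun y : R2 => h (x0 + s • y) := hh.continuous.comp (by fun_prop)
    refine integral_mono ((integrable_mul_wt hcont).const_mul _) ?_ fun y => ?_
    · refine (hcont.mul (continuous_wt.comp (by fun_prop))).integrable_of_hasCompactSupport ?_
      refine HasCompactSupport.mul_left ?_
      have := hasCompactSupport_wt.comp_homeomorph
        ((Homeomorph.smulOfNeZero k hk0.ne').trans (Homeomorph.addRight a) : R2 ≃ₜ R2)
      exact this
    · simp only
      have hnorm : ‖k • y + a‖ ≤ k * (‖y‖ + θ) := by
        calc ‖k • y + a‖ ≤ ‖k • y‖ + ‖a‖ := norm_add_le _ _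
          _ ≤ k * ‖y‖ + θ * k := by
            rw [norm_smul, Real.norm_of_nonneg hk0.le]; linarith
          _ = k * (‖y‖ + θ) := by ring
      by_cases hz : ‖k • y + a‖ ≤ 1
      · have hh0 : 0 ≤ h (x0 + s • y) := by
          refine hpos _ (hsub _ ?_)
          rw [← hpt y, add_sub_cancel_left, norm_smul, Real.norm_of_nonneg hS0.le]
          nlinarith
        -- the weight of the larger disc dominates a multiple of the weight of the smaller one
        have hw : k ^ 2 * wt y ≤ wt (k • y + a) := by
          by_cases hy : 1 ≤ ‖y‖
          · rw [wt_eq_zero hy, mul_zero]; exact wt_nonneg _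
          · rw [not_le] at hy
            have h1 : wt y = 1 - ‖y‖ ^ 2 := max_eq_left (by nlinarith [norm_nonneg y])
            refine le_trans ?_ (le_max_left _ _)
            rw [h1]
            have h2 : ‖k • y + a‖ ^ 2 ≤ (k * (‖y‖ + θ)) ^ 2 :=
              pow_le_pow_left₀ (norm_nonneg _) hnorm 2
            have h3 : k ^ 2 * (1 + θ) ^ 2 = 1 := by rw [← mul_pow, hk1, one_pow]
            have h4 : 0 ≤ k ^ 2 * (2 * θ * (1 - ‖y‖)) := by
              have : 0 ≤ 1 - ‖y‖ := by linarith
              positivity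
            nlinarith
        calc k ^ 2 * (h (x0 + s • y) * wt y) = h (x0 + s • y) * (k ^ 2 * wt y) := by ring
          _ ≤ _ := mul_le_mul_of_nonneg_left hw hh0
      · have hy : 1 ≤ ‖y‖ := by
          rw [not_le] at hz
          by_contra! hy
          nlinarith
        rw [wt_eq_zero hy, wt_eq_zero (le_of_not_ge hz)]; simp
  have hfin : k ^ 4 * (h x0 * I) ≤ (h x + c * S ^ 2 / 8) * I := by
    calc k ^ 4 * (h x0 * I) ≤ k ^ 4 * ∫ y, h (x0 + s • y) * wt y := by gcongr
      _ = k ^ 2 * (k ^ 2 * ∫ y, h (x0 + s • y) * wt y) := by ring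
      _ ≤ k ^ 2 * ∫ y, h (x0 + s • y) * wt (k • y + a) := by gcongr
      _ ≤ _ := hBsub ▸ hB
  have h5 : k ^ 4 * h x0 ≤ h x + c * S ^ 2 / 8 := by
    rw [← mul_assoc] at hfin
    exact le_of_mul_le_mul_right hfin hI0
  rw [← inv_pow, ← hk]
  have h6 : S ^ 2 ≤ 4 * s ^ 2 := by
    rw [hS, mul_pow]
    gcongr
    nlinarith
  nlinarith

/-- The Harnack inequality for a function that is only defined near the disc. -/
theorem harnack_local {h : R2 → ℝ} {U : Set R2} (hU : IsOpen U) (hh : ContDiffOn ℝ 2 h U)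
    {x0 x : R2} {s θ c : ℝ} (hs : 0 < s) (hθ : 0 < θ) (hθ1 : θ ≤ 1) (hc : 0 ≤ c)
    (hx : ‖x - x0‖ ≤ θ * s) (hsub : closedBall x0 (4 * s) ⊆ U)
    (hpos : ∀ z ∈ closedBall x0 (3 * s), 0 ≤ h z)
    (hlap : ∀ z ∈ closedBall x0 (3 * s), 0 ≤ lap h z ∧ lap h z ≤ c) :
    ((1 + θ) ^ 4)⁻¹ * h x0 ≤ h x + c * s ^ 2 / 2 := by
  -- a cutoff equal to `1` near the disc of radius `3s` makes the function globally defined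
  let b : ContDiffBump x0 := ⟨7 / 2 * s, 4 * s, by positivity, by linarith⟩
  have hg : ContDiff ℝ 2 fun z => b z * h z := by
    refine contDiff_iff_contDiffAt.2 fun z => ?_
    by_cases hz : z ∈ tsupport (fun z => b z * h z)
    swap
    · have hzero : (fun z => b z * h z) =ᶠ[nhds z] fun _ => 0 :=
        notMem_tsupport_iff_eventuallyEq.1 hz
      exact contDiffAt_const.congr_of_eventuallyEq hzero
    have hz' : z ∈ tsupport b := tsupport_mul_subset_left hz
    rw [b.tsupport_eq] at hz'
    exact b.contDiff.contDiffAt.mul (hh.contDiffAt (hU.mem_nhds (hsub hz')))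
  have hev : ∀ z ∈ closedBall x0 (3 * s), (fun z => b z * h z) =ᶠ[nhds z] h := by
    intro z hz
    have : z ∈ ball x0 (7 / 2 * s) := by
      rw [mem_closedBall] at hz; rw [mem_ball]; linarith
    filter_upwards [isOpen_ball.mem_nhds this] with y hy
    rw [b.one_of_mem_closedBall (ball_subset_closedBall hy), one_mul]
  have hx3 : x ∈ closedBall x0 (3 * s) := by
    rw [mem_closedBall, dist_eq_norm]; nlinarith
  have h0 : x0 ∈ closedBall x0 (3 * s) := mem_closedBall_self (by positivity)
  have := harnack hg hs hθ hθ1 hc hx (fun z hz => by rw [(hev z hz).eq_of_nhds]; exact hpos z hz)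
    (fun z hz => by rw [lap_congr (hev z hz)]; exact hlap z hz)
  rwa [(hev x hx3).eq_of_nhds, (hev x0 h0).eq_of_nhds] at this

/-! ### The lattice and the vortex set -/

namespace VortexData

variable (D : VortexData)

/-- Continuous coordinates with respect to the basis `a₁, a₂`. -/
theorem exists_coords : ∃ L : Fin 2 → R2 →L[ℝ] ℝ,
    (∀ x, x = L 0 x • D.a1 + L 1 x • D.a2) ∧
    (∀ s t : ℝ, L 0 (s • D.a1 + t • D.a2) = s ∧ L 1 (s • D.a1 + t • D.a2) = t) := by
  let b := basisOfLinearIndependentOfCardEqFinrank D.indep (by simp)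
  have hb : ⇑b = ![D.a1, D.a2] := coe_basisOfLinearIndependentOfCardEqFinrank _ _
  have hb0 : b 0 = D.a1 := by rw [hb]; rfl
  have hb1 : b 1 = D.a2 := by rw [hb]; rfl
  refine ⟨fun i => (b.coord i).toContinuousLinearMap, fun x => ?_, fun s t => ?_⟩
  · have := b.sum_repr x
    rw [Fin.sum_univ_two, hb0, hb1] at this
    simpa using this.symm
  · rw [← hb0, ← hb1]
    simp

theorem lattice_neg {w : R2} (hw : w ∈ lattice D.a1 D.a2) : -w ∈ lattice D.a1 D.a2 := by
  obtain ⟨k, l, rfl⟩ := hw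
  exact ⟨-k, -l, by push_cast; module⟩

theorem lattice_add {w z : R2} (hw : w ∈ lattice D.a1 D.a2) (hz : z ∈ lattice D.a1 D.a2) :
    w + z ∈ lattice D.a1 D.a2 := by
  obtain ⟨k, l, rfl⟩ := hw
  obtain ⟨k', l', rfl⟩ := hz
  exact ⟨k + k', l + l', by push_cast; module⟩

theorem p_mem_sing (i : Fin D.n) : D.p i ∈ D.sing := ⟨i, 0, ⟨0, 0, by simp⟩, by simp⟩

theorem add_mem_sing {x w : R2} (hx : x ∈ D.sing) (hw : w ∈ lattice D.a1 D.a2) :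
    x + w ∈ D.sing := by
  obtain ⟨i, z, hz, rfl⟩ := hx
  exact ⟨i, z + w, D.lattice_add hz hw, by abel⟩

theorem add_mem_sing_iff {x w : R2} (hw : w ∈ lattice D.a1 D.a2) :
    x + w ∈ D.sing ↔ x ∈ D.sing :=
  ⟨fun h => by simpa using D.add_mem_sing h (D.lattice_neg hw), fun h => D.add_mem_sing h hw⟩

/-- A continuous periodic function attains its maximum. -/
theorem exists_max {f : R2 → ℝ} (hf : Continuous f) (hp : Periodic2 D.a1 D.a2 f) :
    ∃ x0, ∀ x, f x ≤ f x0 := by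
  obtain ⟨L, hL, -⟩ := D.exists_coords
  have hc : Continuous fun q : ℝ × ℝ => f (q.1 • D.a1 + q.2 • D.a2) := hf.comp (by fun_prop)
  obtain ⟨q, -, hq⟩ := (isCompact_Icc (a := (0 : ℝ)) (b := 1)).prod
    (isCompact_Icc (a := (0 : ℝ)) (b := 1)) |>.exists_isMaxOn
    ⟨(0, 0), by simp⟩ hc.continuousOn
  refine ⟨q.1 • D.a1 + q.2 • D.a2, fun x => ?_⟩
  have hw : ((⌊L 0 x⌋ : ℤ) : ℝ) • D.a1 + ((⌊L 1 x⌋ : ℤ) : ℝ) • D.a2 ∈ lattice D.a1 D.a2 :=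
    ⟨_, _, rfl⟩
  have hmem : (Int.fract (L 0 x), Int.fract (L 1 x)) ∈ Icc (0 : ℝ) 1 ×ˢ Icc (0 : ℝ) 1 :=
    ⟨⟨Int.fract_nonneg _, (Int.fract_lt_one _).le⟩, ⟨Int.fract_nonneg _, (Int.fract_lt_one _).le⟩⟩
  have h := hq hmem
  have e : x = (Int.fract (L 0 x) • D.a1 + Int.fract (L 1 x) • D.a2)
      + (((⌊L 0 x⌋ : ℤ) : ℝ) • D.a1 + ((⌊L 1 x⌋ : ℤ) : ℝ) • D.a2) := by
    conv_lhs => rw [hL x, ← Int.fract_add_floor (L 0 x), ← Int.fract_add_floor (L 1 x)]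
    module
  rw [e, hp _ _ hw]
  exact h

/-- The singular set is locally finite. -/
theorem sing_inter_finite (R : ℝ) : (D.sing ∩ closedBall 0 R).Finite := by
  obtain ⟨L, -, hL⟩ := D.exists_coords
  have hfin : ∀ i : Fin D.n, {k : ℤ × ℤ | ‖D.p i + ((k.1 : ℝ) • D.a1 + (k.2 : ℝ) • D.a2)‖ ≤ R}.Finite
      := by
    intro i
    set B := R + ‖D.p i‖ with hB
    have hb : ∀ M : ℝ, {k : ℤ | |(k : ℝ)| ≤ M}.Finite := by
      intro M
      refine (Set.finite_Icc (-⌈M⌉) ⌈M⌉).subset fun k hk => ?_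
      have hk' := abs_le.1 (show |(k : ℝ)| ≤ M from hk)
      have := Int.le_ceil M
      constructor
      · have : (-(⌈M⌉ : ℝ)) ≤ k := by linarith [hk'.1]
        exact_mod_cast this
      · have : (k : ℝ) ≤ ⌈M⌉ := by linarith [hk'.2]
        exact_mod_cast this
    refine ((hb (‖L 0‖ * B)).prod (hb (‖L 1‖ * B))).subset fun k hk => ?_
    have hk' : ‖D.p i + ((k.1 : ℝ) • D.a1 + (k.2 : ℝ) • D.a2)‖ ≤ R := hk
    have hn : ‖(k.1 : ℝ) • D.a1 + (k.2 : ℝ) • D.a2‖ ≤ B := by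
      have := norm_sub_le (D.p i + ((k.1 : ℝ) • D.a1 + (k.2 : ℝ) • D.a2)) (D.p i)
      rw [add_sub_cancel_left] at this
      linarith
    have h0 := (L 0).le_opNorm ((k.1 : ℝ) • D.a1 + (k.2 : ℝ) • D.a2)
    have h1 := (L 1).le_opNorm ((k.1 : ℝ) • D.a1 + (k.2 : ℝ) • D.a2)
    rw [(hL _ _).1] at h0
    rw [(hL _ _).2] at h1
    exact ⟨h0.trans (by gcongr), h1.trans (by gcongr)⟩
  refine (Set.finite_iUnion fun i => (hfin i).image
    fun k : ℤ × ℤ => D.p i + ((k.1 : ℝ) • D.a1 + (k.2 : ℝ) • D.a2)).subset ?_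
  rintro x ⟨⟨i, w, ⟨k, l, rfl⟩, rfl⟩, hx⟩
  rw [mem_iUnion]
  exact ⟨i, (k, l), by simpa using hx, rfl⟩

/-- Near any point there is no other singular point. -/
theorem exists_isolated (x : R2) : ∃ δ > 0, ∀ q ∈ D.sing, q ∈ closedBall x δ → q = x := by
  have hfin := (D.sing_inter_finite (‖x‖ + 1)).subset
    (sdiff_subset : (D.sing ∩ closedBall 0 (‖x‖ + 1)) \ {x} ⊆ _)
  have hx : x ∈ ((D.sing ∩ closedBall 0 (‖x‖ + 1)) \ {x})ᶜ := by simp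
  obtain ⟨δ, hδ, hsub⟩ := Metric.nhds_basis_closedBall.mem_iff.1 (hfin.isClosed.isOpen_compl.mem_nhds hx)
  refine ⟨min δ 1, by positivity, fun q hq hqx => ?_⟩
  by_contra hne
  rw [mem_closedBall] at hqx
  refine hsub (mem_closedBall.2 (hqx.trans (min_le_left _ _))) ⟨⟨hq, ?_⟩, hne⟩
  have := hqx.trans (min_le_right _ _)
  rw [dist_eq_norm] at this
  rw [mem_closedBall_zero_iff]
  linarith [norm_sub_norm_le q x]

theorem isClosed_sing : IsClosed D.sing := by
  rw [← isOpen_compl_iff, Metric.isOpen_iff]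
  intro x hx
  obtain ⟨δ, hδ, h⟩ := D.exists_isolated x
  exact ⟨δ, hδ, fun q hq hqs => hx (h q hqs (ball_subset_closedBall hq) ▸ hqs)⟩

/-- A common isolation radius for all vortex points. -/
theorem exists_isolation_radius :
    ∃ δ > 0, ∀ i, ∀ q ∈ D.sing, q ∈ closedBall (D.p i) δ → q = D.p i := by
  choose d hd h using fun i => D.exists_isolated (D.p i)
  rcases isEmpty_or_nonempty (Fin D.n) with he | he
  · exact ⟨1, one_pos, fun i => he.elim i⟩
  · obtain ⟨j, hj⟩ := Finite.exists_min d
    exact ⟨d j, hd j, fun i q hq hqi => h i q hq (closedBall_subset_closedBall (hj i) hqi)⟩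

theorem expu_of_mem {u : R2 → ℝ} {x : R2} (hx : x ∈ D.sing) : D.expu u x = 0 := if_pos hx

theorem expu_of_notMem {u : R2 → ℝ} {x : R2} (hx : x ∉ D.sing) : D.expu u x = Real.exp (u x) :=
  if_neg hx

theorem expu_nonneg (u : R2 → ℝ) (x : R2) : 0 ≤ D.expu u x := by
  unfold expu; split_ifs <;> positivity

theorem expu_periodic {u : R2 → ℝ} (hu : Periodic2 D.a1 D.a2 u) :
    Periodic2 D.a1 D.a2 (D.expu u) := by
  intro x w hw
  by_cases hx : x ∈ D.sing
  · rw [D.expu_of_mem hx, D.expu_of_mem ((D.add_mem_sing_iff hw).2 hx)]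
  · rw [D.expu_of_notMem hx, D.expu_of_notMem (fun h => hx ((D.add_mem_sing_iff hw).1 h)), hu x w hw]

end VortexData

/-! ### Estimates for solutions -/

section Solution

variable {D : VortexData} {lam mu : ℝ} {u N : R2 → ℝ}

theorem sol_contDiffAt (hs : IsMCSSolution D lam mu u N) {x : R2} (hx : x ∉ D.sing) :
    ContDiffAt ℝ 2 u x :=
  (hs.2.2.1.contDiffAt (D.isClosed_sing.isOpen_compl.mem_nhds hx)).of_le
    (WithTop.coe_le_coe.2 (le_top : (2 : ℕ∞) ≤ ⊤))

theorem sol_contDiff (hs : IsMCSSolution D lam mu u N) : ContDiff ℝ 2 N :=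
  hs.2.2.2.1.of_le (WithTop.coe_le_coe.2 (le_top : (2 : ℕ∞) ≤ ⊤))

theorem sol_lap_u (hs : IsMCSSolution D lam mu u N) {x : R2} (hx : x ∉ D.sing) :
    lap u x = lam * mu * Real.exp (u x) - mu * N x := hs.2.2.2.2.2.1 x hx

theorem sol_lap_N (hs : IsMCSSolution D lam mu u N) (x : R2) :
    lap N x = mu * (mu + lam * D.expu u x) * N x - lam * mu * (mu + lam) * D.expu u x :=
  hs.2.2.2.2.2.2 x

/-- `e^u` vanishes at least quadratically at the vortex points. -/
theorem expu_le_near (hs : IsMCSSolution D lam mu u N) (i : Fin D.n) :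
    ∃ C > 0, ∃ η > 0, ∀ y ∈ ball (D.p i) η, D.expu u y ≤ C * ‖y - D.p i‖ ^ 2 := by
  obtain ⟨e, he, v, hv, huv⟩ := hs.2.2.2.2.1 i
  have hvc : ContinuousAt v (D.p i) :=
    (hv.contDiffAt (isOpen_ball.mem_nhds (mem_ball_self he))).continuousAt
  have hev : ∀ᶠ y in nhds (D.p i), v y < v (D.p i) + 1 :=
    hvc.tendsto.eventually (gt_mem_nhds (by linarith))
  obtain ⟨η, hη, hsub⟩ := Metric.mem_nhds_iff.1
    (inter_mem hev (inter_mem (ball_mem_nhds _ he) (ball_mem_nhds _ one_pos)))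
  refine ⟨Real.exp (v (D.p i) + 1), Real.exp_pos _, η, hη, fun y hy => ?_⟩
  obtain ⟨h1, h2, h3⟩ := hsub hy
  by_cases hys : y ∈ D.sing
  · rw [D.expu_of_mem hys]; positivity
  · have hne : y ≠ D.p i := fun h => hys (h ▸ D.p_mem_sing i)
    have hn : 0 < ‖y - D.p i‖ := norm_pos_iff.2 (sub_ne_zero.2 hne)
    have hn1 : ‖y - D.p i‖ ≤ 1 := by
      rw [mem_ball, dist_eq_norm] at h3; exact h3.le
    rw [D.expu_of_notMem hys, huv y h2 hne, Real.exp_add]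
    have e1 : Real.exp (2 * (D.m i : ℝ) * Real.log ‖y - D.p i‖) = ‖y - D.p i‖ ^ (2 * D.m i) := by
      rw [show 2 * (D.m i : ℝ) * Real.log ‖y - D.p i‖
        = ((2 * D.m i : ℕ) : ℝ) * Real.log ‖y - D.p i‖ by push_cast; ring,
        Real.exp_nat_mul, Real.exp_log hn]
    rw [e1]
    have h4 : ‖y - D.p i‖ ^ (2 * D.m i) ≤ ‖y - D.p i‖ ^ 2 :=
      pow_le_pow_of_le_one hn.le hn1 (by have := D.m_pos i; omega)
    have h5 : Real.exp (v y) ≤ Real.exp (v (D.p i) + 1) := Real.exp_le_exp.2 (le_of_lt h1)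
    gcongr

theorem continuous_expu (hs : IsMCSSolution D lam mu u N) : Continuous (D.expu u) := by
  rw [continuous_iff_continuousAt]
  intro x
  by_cases hx : x ∈ D.sing
  · obtain ⟨i, w, hw, rfl⟩ := hx
    obtain ⟨C, hC, η, hη, h⟩ := expu_le_near hs i
    have h0 : D.expu u (D.p i + w) = 0 := D.expu_of_mem ⟨i, w, hw, rfl⟩
    have hlim : Tendsto (fun y : R2 => C * ‖y - w - D.p i‖ ^ 2) (nhds (D.p i + w)) (nhds 0) := by
      have : Continuous fun y : R2 => C * ‖y - w - D.p i‖ ^ 2 := by fun_prop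
      simpa using this.tendsto (D.p i + w)
    rw [ContinuousAt, h0]
    refine tendsto_of_tendsto_of_tendsto_of_le_of_le' tendsto_const_nhds hlim
      (Eventually.of_forall fun y => D.expu_nonneg u y) ?_
    filter_upwards [ball_mem_nhds (D.p i + w) hη] with y hy
    have := h (y - w) (by rw [mem_ball, dist_eq_norm] at hy ⊢; convert hy using 2; abel)
    rwa [← D.expu_periodic hs.1 (y - w) w hw, sub_add_cancel] at this
  · have he : D.expu u =ᶠ[nhds x] fun y => Real.exp (u y) := by
      filter_upwards [D.isClosed_sing.isOpen_compl.mem_nhds hx] with y hy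
      exact D.expu_of_notMem hy
    exact (sol_contDiffAt hs hx).continuousAt.rexp.congr he.symm

/-- The second equation at a minimum of `N` excludes a negative value. -/
theorem N_nonneg (hs : IsMCSSolution D lam mu u N) (hl : 0 < lam) (hm : 0 < mu) (x : R2) :
    0 ≤ N x := by
  have hN := sol_contDiff hs
  obtain ⟨x0, h0⟩ := D.exists_max (f := fun y => (-1) * N y) (by have := hN.continuous; fun_prop)
    fun x w hw => by simp only [hs.2.1 x w hw]
  have hlap := lap_nonpos_of_isLocalMax (contDiff_const.mul hN).contDiffAt
    (Eventually.of_forall h0 : IsLocalMax (fun y => (-1) * N y) x0)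
  rw [lap_const_mul hN.contDiffAt, sol_lap_N hs] at hlap
  have hv := D.expu_nonneg u x0
  have : 0 ≤ N x0 := by
    by_contra! hneg
    have h1 : 0 ≤ lam * mu * (mu + lam) * D.expu u x0 := by positivity
    have h2 : 0 < mu * (mu + lam * D.expu u x0) := by positivity
    nlinarith
  linarith [h0 x]

/-- At a maximum `x₂` of `e^u` the first equation gives `λe^u ≤ N`, so `λe^u` is bounded by `max N`
everywhere; inserted in the second equation at a maximum of `N`, this gives `max N ≤ λ`. -/
theorem N_le (hs : IsMCSSolution D lam mu u N) (hl : 0 < lam) (hm : 0 < mu) (x : R2) :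
    N x ≤ lam := by
  have hN := sol_contDiff hs
  obtain ⟨x1, h1⟩ := D.exists_max hN.continuous hs.2.1
  obtain ⟨x2, h2⟩ := D.exists_max (continuous_expu hs) (D.expu_periodic hs.1)
  have hlap := lap_nonpos_of_isLocalMax hN.contDiffAt (Eventually.of_forall h1)
  rw [sol_lap_N hs] at hlap
  refine (h1 x).trans ?_
  set a := D.expu u x1 with ha
  have ha0 : 0 ≤ a := D.expu_nonneg u x1
  have hlap' : (mu + lam * a) * N x1 ≤ lam * (mu + lam) * a := by
    refine le_of_mul_le_mul_left ?_ hm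
    linarith
  rcases ha0.eq_or_lt with h | hapos
  · rw [← h] at hlap'
    nlinarith
  · have hx2 : x2 ∉ D.sing := fun h => by
      have := h2 x1
      rw [D.expu_of_mem h] at this
      exact absurd this (not_le.2 hapos)
    have hmax : IsLocalMax u x2 := by
      filter_upwards [D.isClosed_sing.isOpen_compl.mem_nhds hx2] with y hy
      have := h2 y
      rwa [D.expu_of_notMem hy, D.expu_of_notMem hx2, Real.exp_le_exp] at this
    have hlap2 := lap_nonpos_of_isLocalMax (sol_contDiffAt hs hx2) hmax
    rw [sol_lap_u hs hx2, ← D.expu_of_notMem hx2] at hlap2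
    have h3 : lam * D.expu u x2 ≤ N x2 := le_of_mul_le_mul_left (by linarith) hm
    have h4 : lam * a ≤ N x1 :=
      (mul_le_mul_of_nonneg_left (h2 x1) hl.le).trans (h3.trans (h1 x2))
    have h5 : lam * a * N x1 ≤ lam * a * lam := by nlinarith
    exact le_of_mul_le_mul_left h5 (by positivity)

/-- The sign of `λeᵘ - N`: at a positive maximum the gradient term `eᵘ|∇u|²` in `Δeᵘ` has the
favourable sign. -/
theorem expu_le_N (hs : IsMCSSolution D lam mu u N) (hl : 0 < lam) (hm : 0 < mu) (x : R2) :
    lam * D.expu u x ≤ N x := by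
  have hN := sol_contDiff hs
  have hvc := continuous_expu hs
  obtain ⟨x3, h3⟩ := D.exists_max (f := fun y => lam * D.expu u y - N y)
    ((continuous_const.mul hvc).sub hN.continuous)
    fun x w hw => by simp only [hs.2.1 x w hw, D.expu_periodic hs.1 x w hw]
  by_contra! hcon
  have hW : 0 < lam * D.expu u x3 - N x3 := by have := h3 x; linarith
  have hN0 := N_nonneg hs hl hm x3
  have hN1 := N_le hs hl hm x3
  have hx3 : x3 ∉ D.sing := fun h => by
    rw [D.expu_of_mem h] at hW; linarith
  have hu := sol_contDiffAt hs hx3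
  have hmax : IsLocalMax (fun y => lam * Real.exp (u y) - N y) x3 := by
    filter_upwards [D.isClosed_sing.isOpen_compl.mem_nhds hx3] with y hy
    have := h3 y
    simpa only [D.expu_of_notMem hy, D.expu_of_notMem hx3] using this
  have hexp : ContDiffAt ℝ 2 (fun y => Real.exp (u y)) x3 := hu.exp
  have hlap := lap_nonpos_of_isLocalMax ((contDiffAt_const.mul hexp).sub hN.contDiffAt) hmax
  rw [lap_sub (contDiffAt_const.mul hexp) hN.contDiffAt, lap_const_mul hexp, lap_exp hu,
    sol_lap_u hs hx3, sol_lap_N hs] at hlap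
  rw [D.expu_of_notMem hx3] at hlap hW
  have hS : 0 ≤ ∑ i, (fderiv ℝ u x3 (stdE i)) ^ 2 := Finset.sum_nonneg fun i _ => sq_nonneg _
  set S := ∑ i, (fderiv ℝ u x3 (stdE i)) ^ 2
  set a := Real.exp (u x3) with ha
  have ha0 : 0 < a := Real.exp_pos _
  have e1 : lam * (a * (lam * mu * a - mu * N x3 + S))
      - (mu * (mu + lam * a) * N x3 - lam * mu * (mu + lam) * a)
      = (lam * mu * a + mu ^ 2) * (lam * a - N x3) + lam * a * S
        + lam * mu * a * (lam - N x3) := by ring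
  rw [e1] at hlap
  have t1 : 0 < (lam * mu * a + mu ^ 2) * (lam * a - N x3) := by positivity
  have t2 : 0 ≤ lam * a * S := by positivity
  have t3 : 0 ≤ lam * mu * a * (lam - N x3) := mul_nonneg (by positivity) (by linarith)
  linarith

theorem expu_le_one (hs : IsMCSSolution D lam mu u N) (hl : 0 < lam) (hm : 0 < mu) (x : R2) :
    D.expu u x ≤ 1 := by
  have := (expu_le_N hs hl hm x).trans (N_le hs hl hm x)
  nlinarith

/-- Comparison with `log |x - p|` near a vortex point: on the scale `r = (λμ)^(-1/2)`, `e^u`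
vanishes at the vortex point at least linearly, with a constant independent of the solution. -/
theorem expu_le_vortex (hs : IsMCSSolution D lam mu u N) (hl : 0 < lam) (hm : 0 < mu)
    {i : Fin D.n} {r : ℝ} (hr : 0 < r) (hlr : lam * mu * r ^ 2 ≤ 1)
    (hiso : ∀ q ∈ D.sing, q ∈ closedBall (D.p i) r → q = D.p i) {x : R2}
    (hx : x ∈ ball (D.p i) r) : D.expu u x ≤ 3 * (‖x - D.p i‖ / r) := by
  by_contra! hcon
  set p := D.p i with hp
  have hxr : ‖x - p‖ < r := by rwa [mem_ball, dist_eq_norm] at hx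
  have hxs : x ∉ D.sing := fun h => by
    rw [D.expu_of_mem h] at hcon
    exact absurd hcon (not_lt.2 (by positivity))
  have hxp : x ≠ p := fun h => hxs (h ▸ D.p_mem_sing i)
  have hx0 : 0 < ‖x - p‖ := norm_pos_iff.2 (sub_ne_zero.2 hxp)
  obtain ⟨C, hC, η, hη, hnear⟩ := expu_le_near hs i
  -- an inner radius on which the bound already holds, by quadratic vanishing
  set s := min (‖x - p‖) (min (η / 2) (1 / (C * r))) with hsdef
  have hs0 : 0 < s := by positivity
  have hsx : s ≤ ‖x - p‖ := min_le_left _ _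
  have hsη : s < η := by
    have : s ≤ η / 2 := (min_le_right _ _).trans (min_le_left _ _)
    linarith
  have hsC : s * (C * r) ≤ 1 := by
    have : s ≤ 1 / (C * r) := (min_le_right _ _).trans (min_le_right _ _)
    rwa [le_div_iff₀ (by positivity)] at this
  set A : Set R2 := closedBall p r ∩ {y | s ≤ ‖y - p‖} with hA
  have hAc : IsCompact A :=
    (isCompact_closedBall p r).inter_right (isClosed_le continuous_const (by fun_prop))
  have hAs : ∀ y ∈ A, y ≠ p ∧ y ∉ D.sing := by
    intro y hy
    have h1 : y ≠ p := fun h => by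
      have := hy.2
      simp only [mem_ofPred_eq, h, sub_self, norm_zero] at this
      linarith
    exact ⟨h1, fun h => h1 (hiso y h hy.1)⟩
  -- `Δu ≥ -λμ` because `N ≤ λ`, so the quadratic term makes `F` strictly subharmonic on the annulus
  set F : R2 → ℝ := fun y => u y - Real.log ‖y - p‖ + lam * mu * ‖y - p‖ ^ 2 with hF
  have hFd : ∀ y ∈ A, ContDiffAt ℝ 2 F y := fun y hy =>
    ((sol_contDiffAt hs (hAs y hy).2).sub (contDiffAt_log_norm (hAs y hy).1)).add
      (contDiffAt_const.mul (contDiff_norm_sub_sq p).contDiffAt)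
  have hxA : x ∈ A := ⟨ball_subset_closedBall hx, hsx⟩
  obtain ⟨z, hz, hzmax⟩ := hAc.exists_isMaxOn ⟨x, hxA⟩
    fun y hy => (hFd y hy).continuousAt.continuousWithinAt
  have hzp := (hAs z hz).1
  have hzs := (hAs z hz).2
  have hFx : 1 - Real.log r < F x := by
    have h1 : Real.log (3 * (‖x - p‖ / r)) < u x := by
      rw [D.expu_of_notMem hxs] at hcon
      exact (Real.log_lt_iff_lt_exp (by positivity)).2 hcon
    rw [Real.log_mul (by norm_num) (by positivity), Real.log_div hx0.ne' hr.ne'] at h1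
    have h3 : 1 < Real.log 3 := by
      rw [Real.lt_log_iff_exp_lt (by norm_num)]
      linarith [Real.exp_one_lt_d9]
    have : 0 ≤ lam * mu * ‖x - p‖ ^ 2 := by positivity
    simp only [hF]; linarith
  have hFz : 1 - Real.log r < F z := hFx.trans_le (hzmax hxA)
  have hzr : ‖z - p‖ ≤ r := by have := hz.1; rwa [mem_closedBall, dist_eq_norm] at this
  have hquad : lam * mu * ‖z - p‖ ^ 2 ≤ 1 := by
    refine le_trans ?_ hlr
    gcongr
  have hz0 : 0 < ‖z - p‖ := hs0.trans_le hz.2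
  -- on the outer circle `u ≤ 0`, on the inner one quadratic vanishing decides
  rcases hzr.eq_or_lt with hzr' | hzr'
  · have hu0 : u z ≤ 0 := by
      have := expu_le_one hs hl hm z
      rwa [D.expu_of_notMem hzs, Real.exp_le_one_iff] at this
    simp only [hF] at hFz
    rw [hzr'] at hFz hquad
    linarith
  · rcases (show s ≤ ‖z - p‖ from hz.2).eq_or_lt with hzs' | hzs'
    · have h1 := hnear z (by rw [mem_ball, dist_eq_norm, ← hp, ← hzs']; exact hsη)
      rw [D.expu_of_notMem hzs] at h1
      have h2 : Real.exp (u z) ≤ ‖z - p‖ / r := by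
        refine h1.trans ?_
        rw [le_div_iff₀ hr, ← hp, ← hzs']
        nlinarith
      have h3 : u z ≤ Real.log (‖z - p‖ / r) := (Real.le_log_iff_exp_le (by positivity)).2 h2
      rw [Real.log_div hz0.ne' hr.ne'] at h3
      simp only [hF] at hFz
      linarith
    · have hloc : IsLocalMax F z := by
        refine hzmax.isLocalMax ?_
        refine inter_mem (mem_of_superset (isOpen_ball.mem_nhds ?_) ball_subset_closedBall) ?_
        · rwa [mem_ball, dist_eq_norm]
        · refine mem_of_superset ((isOpen_lt continuous_const (by fun_prop :
            Continuous fun y : R2 => ‖y - p‖)).mem_nhds hzs')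
            fun y hy => le_of_lt (show s < ‖y - p‖ from hy)
      have hlap := lap_nonpos_of_isLocalMax (hFd z hz) hloc
      have hu := sol_contDiffAt hs hzs
      have hlog := contDiffAt_log_norm hzp
      have hq := (contDiff_norm_sub_sq p).contDiffAt (x := z)
      rw [hF, lap_add (hu.sub hlog) (contDiffAt_const.mul hq), lap_sub hu hlog,
        lap_const_mul hq, lap_norm_sub_sq, lap_log_norm hzp, sol_lap_u hs hzs] at hlap
      have h1 := N_le hs hl hm z
      have h2 : 0 < lam * mu * Real.exp (u z) := by positivity
      have h3 : mu * N z ≤ mu * lam := by gcongr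
      have h4 : 0 < lam * mu := by positivity
      linarith

/-- Since `N` solves an elliptic equation with the large zeroth-order coefficient `μ²`, the value
`N(x₀)/λ` is controlled by `e^u` on a disc of radius `ρ`, up to errors of order `λ/μ` and
`(ρμ)^(-2)`. -/
theorem N_le_of_expu_le (hs : IsMCSSolution D lam mu u N) (hl : 0 < lam) (hm : 0 < mu)
    {x0 : R2} {ρ b : ℝ} (hρ : 0 < ρ) (hb : ∀ y ∈ closedBall x0 ρ, D.expu u y ≤ b) :
    N x0 / lam ≤ b + lam / mu + 4 / (ρ * mu) ^ 2 := by
  have hN := sol_contDiff hs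
  have hx0 : x0 ∈ closedBall x0 ρ := mem_closedBall_self hρ.le
  have hb0 : 0 ≤ b := (D.expu_nonneg u x0).trans (hb x0 hx0)
  -- the barrier brings `F` down to at most `0` on the boundary circle, since `N ≤ λ`
  set F : R2 → ℝ := fun y => N y - lam / ρ ^ 2 * ‖y - x0‖ ^ 2 with hF
  have hFd : ContDiff ℝ 2 F := hN.sub (contDiff_const.mul (contDiff_norm_sub_sq x0))
  obtain ⟨z, hz, hzmax⟩ := (isCompact_closedBall x0 ρ).exists_isMaxOn ⟨x0, hx0⟩
    hFd.continuous.continuousOn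
  have h0 : N x0 ≤ F z := by
    have := hzmax hx0
    simpa [hF] using this
  have hzr : ‖z - x0‖ ≤ ρ := by rwa [mem_closedBall, dist_eq_norm] at hz
  rcases hzr.eq_or_lt with h | h
  · have h1 : F z ≤ 0 := by
      simp only [hF, h]
      rw [div_mul_cancel₀ _ (by positivity)]
      linarith [N_le hs hl hm z]
    have : N x0 / lam ≤ 0 := div_nonpos_of_nonpos_of_nonneg (h0.trans h1) hl.le
    have : 0 ≤ b + lam / mu + 4 / (ρ * mu) ^ 2 := by positivity
    linarith
  · have hloc : IsLocalMax F z := hzmax.isLocalMax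
      (mem_of_superset (isOpen_ball.mem_nhds (by rwa [mem_ball, dist_eq_norm]))
        ball_subset_closedBall)
    have hlap := lap_nonpos_of_isLocalMax hFd.contDiffAt hloc
    have hq := (contDiff_norm_sub_sq x0).contDiffAt (x := z)
    rw [hF, lap_sub hN.contDiffAt (contDiffAt_const.mul hq), lap_const_mul hq, lap_norm_sub_sq,
      sol_lap_N hs] at hlap
    have hN0 := N_nonneg hs hl hm z
    have ha0 := D.expu_nonneg u z
    have ha1 := expu_le_one hs hl hm z
    have hab := hb z hz
    set a := D.expu u z
    have h3 : mu ^ 2 * N z ≤ mu ^ 2 * (lam * b) + lam ^ 2 * mu + 4 * lam / ρ ^ 2 := by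
      have t1 : lam * mu ^ 2 * a ≤ lam * mu ^ 2 * b := by gcongr
      have t2 : lam ^ 2 * mu * a ≤ lam ^ 2 * mu * 1 := by gcongr
      have t3 : 0 ≤ lam * mu * a * N z := by positivity
      have t4 : lam / ρ ^ 2 * 4 = 4 * lam / ρ ^ 2 := by ring
      nlinarith
    have h4 : F z ≤ N z := by
      simp only [hF]
      have : 0 ≤ lam / ρ ^ 2 * ‖z - x0‖ ^ 2 := by positivity
      linarith
    rw [div_le_iff₀ hl]
    refine (h0.trans h4).trans ?_
    have h5 : mu ^ 2 * ((b + lam / mu + 4 / (ρ * mu) ^ 2) * lam)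
        = mu ^ 2 * (lam * b) + lam ^ 2 * mu + 4 * lam / ρ ^ 2 := by
      field_simp
    rw [← h5] at h3
    exact le_of_mul_le_mul_left h3 (by positivity)

/-- The Harnack inequality for `h = -u` becomes an additive estimate for `e^u`: the multiplicative
loss `a < 1` costs only `(1 - a) h e^(-ah) ≤ (1 - a) / a`, uniformly in `h`. -/
theorem exp_harnack {a h θ τ : ℝ} (hh : 0 ≤ h) (hθ : 0 < θ) (hθ1 : θ ≤ 1) (hτ : 0 ≤ τ)
    (hτ1 : τ ≤ 1) (ha : a = ((1 + θ) ^ 4)⁻¹) :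
    Real.exp (τ - a * h) ≤ Real.exp (-h) + 15 * θ + 2 * τ := by
  have ha0 : 0 < a := by rw [ha]; positivity
  have ha1 : a * (1 + θ) ^ 4 = 1 := by rw [ha]; field_simp
  have h4 : (1 + θ) ^ 4 ≤ 1 + 15 * θ := by
    have h2 : θ ^ 2 ≤ θ := by nlinarith
    have h3 : θ ^ 3 ≤ θ := by nlinarith
    have h4 : θ ^ 4 ≤ θ := by nlinarith
    nlinarith
  have h1a : 1 - a ≤ 15 * θ * a := by nlinarith
  set E := Real.exp (-(a * h)) with hE
  have hE0 : 0 < E := Real.exp_pos _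
  have hE1 : E ≤ 1 := Real.exp_le_one_iff.2 (by have : 0 ≤ a * h := by positivity
                                                linarith)
  have hτe : Real.exp τ ≤ 1 + 2 * τ := by
    have := Real.abs_exp_sub_one_le (x := τ) (by rwa [abs_of_nonneg hτ])
    rw [abs_of_nonneg hτ] at this
    linarith [le_abs_self (Real.exp τ - 1)]
  have hE2 : E * (a * h) ≤ 1 := by
    rw [hE, Real.exp_neg, inv_mul_le_iff₀ (Real.exp_pos _), mul_one]
    linarith [Real.add_one_le_exp (a * h)]
  have hE3 : Real.exp (-h) = E * Real.exp (-((1 - a) * h)) := by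
    rw [hE, ← Real.exp_add]; congr 1; ring
  have hE4 : 1 - (1 - a) * h ≤ Real.exp (-((1 - a) * h)) := by
    linarith [Real.add_one_le_exp (-((1 - a) * h))]
  have hE5 : E ≤ Real.exp (-h) + 15 * θ := by
    rw [hE3]
    have t1 := mul_le_mul_of_nonneg_left hE4 hE0.le
    have t2 : (1 - a) * h * E ≤ 15 * θ * a * h * E := by gcongr
    have t3 : 15 * θ * (E * (a * h)) ≤ 15 * θ * 1 := by gcongr
    nlinarith
  rw [sub_eq_add_neg, Real.exp_add]
  nlinarith

/-- Oscillation of `e^u` away from the vortices: `-u` is nonnegative, subharmonic and has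
Laplacian at most `λμ`, so the Harnack inequality applies. -/
theorem expu_le_far (hs : IsMCSSolution D lam mu u N) (hl : 0 < lam) (hm : 0 < mu)
    {x0 x : R2} {s θ : ℝ} (hs0 : 0 < s) (hθ : 0 < θ) (hθ1 : θ ≤ 1) (hls : lam * mu * s ^ 2 ≤ 1)
    (hsub : closedBall x0 (4 * s) ⊆ D.singᶜ) (hx : ‖x - x0‖ ≤ θ * s) :
    D.expu u x ≤ D.expu u x0 + 15 * θ + lam * mu * s ^ 2 := by
  have hmem : ∀ z ∈ closedBall x0 (3 * s), z ∉ D.sing := fun z hz =>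
    hsub (closedBall_subset_closedBall (by linarith) hz)
  have hu0 : ∀ z ∉ D.sing, u z ≤ 0 := fun z hz => by
    have := expu_le_one hs hl hm z
    rwa [D.expu_of_notMem hz, Real.exp_le_one_iff] at this
  have hh := harnack_local (h := fun y => (-1) * u y) (c := lam * mu) D.isClosed_sing.isOpen_compl
    (fun z hz => (contDiffAt_const.mul (sol_contDiffAt hs hz)).contDiffWithinAt) hs0 hθ hθ1
    (by positivity) hx hsub (fun z hz => by linarith [hu0 z (hmem z hz)]) fun z hz => by
      rw [lap_const_mul (sol_contDiffAt hs (hmem z hz)), sol_lap_u hs (hmem z hz)]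
      have h1 := expu_le_N hs hl hm z
      rw [D.expu_of_notMem (hmem z hz)] at h1
      have h2 := N_le hs hl hm z
      have h3 : mu * (lam * Real.exp (u z)) ≤ mu * N z := by gcongr
      have h4 : mu * N z ≤ mu * lam := by gcongr
      have h5 : 0 ≤ lam * mu * Real.exp (u z) := by positivity
      constructor <;> linarith
  have hx0 : x0 ∉ D.sing := hmem x0 (mem_closedBall_self (by positivity))
  have hxs : x ∉ D.sing := hmem x (by rw [mem_closedBall, dist_eq_norm]; nlinarith)
  have he := exp_harnack (h := -u x0) (τ := lam * mu * s ^ 2 / 2) (by linarith [hu0 x0 hx0]) hθ hθ1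
    (by positivity) (by linarith) rfl
  rw [D.expu_of_notMem hx0, D.expu_of_notMem hxs]
  have h1 : u x ≤ lam * mu * s ^ 2 / 2 - ((1 + θ) ^ 4)⁻¹ * -u x0 := by
    linarith
  have := (Real.exp_le_exp.2 h1).trans he
  rw [neg_neg] at this
  linarith

end Solution

/-! ### The uniform limit -/

/-- Oscillation of `e^u` on discs much smaller than `r = (λμ)^(-1/2)`: within `σr` of a vortex both
values are small, and elsewhere the Harnack inequality applies. -/
theorem expu_le_ball {D : VortexData} {lam mu : ℝ} {u N : R2 → ℝ}
    (hs : IsMCSSolution D lam mu u N) (hl : 0 < lam) (hm : 0 < mu)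
    {r σ θ : ℝ} (hr : 0 < r) (hlr : lam * mu * r ^ 2 = 1)
    (hiso : ∀ i, ∀ q ∈ D.sing, q ∈ closedBall (D.p i) r → q = D.p i)
    (hσ : 0 < σ) (hσ1 : 2 * σ < 1) (hθ : 0 < θ) (hθ1 : θ ≤ 1) {x0 y : R2}
    (hy : ‖y - x0‖ ≤ θ * (σ * r / 8)) :
    D.expu u y ≤ D.expu u x0 + (6 * σ + 15 * θ) := by
  have h0 := D.expu_nonneg u x0
  have hσr : 0 < σ * r := by positivity
  by_cases hq : ∃ q ∈ D.sing, ‖x0 - q‖ < σ * r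
  · obtain ⟨q, ⟨i, w, hw, rfl⟩, hq⟩ := hq
    have e : D.expu u y = D.expu u (y - w) := by
      have := D.expu_periodic hs.1 (y - w) w hw
      rwa [sub_add_cancel] at this
    have hy2 : ‖y - w - D.p i‖ ≤ 2 * σ * r := by
      have h1 : y - w - D.p i = (y - x0) + (x0 - (D.p i + w)) := by abel
      rw [h1]
      refine (norm_add_le _ _).trans ?_
      nlinarith
    have hmem : y - w ∈ ball (D.p i) r := by
      rw [mem_ball, dist_eq_norm]
      nlinarith
    have := expu_le_vortex hs hl hm hr hlr.le (hiso i) hmem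
    have h2 : ‖y - w - D.p i‖ / r ≤ 2 * σ := by rwa [div_le_iff₀ hr]
    rw [e]
    linarith
  · push Not at hq
    have hsub : closedBall x0 (4 * (σ * r / 8)) ⊆ D.singᶜ := by
      intro z hz hzs
      rw [mem_closedBall, dist_eq_norm, norm_sub_rev] at hz
      have := hq z hzs
      linarith
    have hls : lam * mu * (σ * r / 8) ^ 2 = σ ^ 2 / 64 := by
      linear_combination σ ^ 2 / 64 * hlr
    have := expu_le_far hs hl hm (by positivity) hθ hθ1 (by rw [hls]; nlinarith) hsub hy
    rw [hls] at this
    nlinarith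

/-- the uniform Chern–Simons limit: for every `ε > 0` there is `K > 0` such
that for all `λ ≥ K`, `μ ≥ Kλ` and every solution, `sup_{ℝ²} |eᵘ − N/λ| ≤ ε`. -/
theorem stmt4 (D : VortexData) :
    ∀ ε > (0:ℝ), ∃ K > (0:ℝ), ∀ lam mu : ℝ, K ≤ lam → K * lam ≤ mu →
      ∀ u N : R2 → ℝ, IsMCSSolution D lam mu u N →
        ∀ x : R2, |D.expu u x - N x / lam| ≤ ε := by
  intro ε hε
  obtain ⟨e, he, he1, hee⟩ : ∃ e > 0, e ≤ 1 ∧ e ≤ ε :=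
    ⟨min ε 1, by positivity, min_le_right _ _, min_le_left _ _⟩
  obtain ⟨δ, hδ, hiso⟩ := D.exists_isolation_radius
  -- `σ` and `θ` make the two error terms `6σ`, `15θ` of `expu_le_ball` equal to `e / 4`
  set σ := e / 24 with hσe
  set θ := e / 60 with hθe
  have hσ : 0 < σ := by positivity
  have hθ : 0 < θ := by positivity
  have hK1 : 0 < 1 / δ ^ 2 := by positivity
  have hK2 : 0 < 4 / e := by positivity
  have hK3 : 0 < 1024 / (θ ^ 2 * σ ^ 2 * e) := by positivity
  refine ⟨1 + 1 / δ ^ 2 + 4 / e + 1024 / (θ ^ 2 * σ ^ 2 * e), by positivity, ?_⟩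
  set K := 1 + 1 / δ ^ 2 + 4 / e + 1024 / (θ ^ 2 * σ ^ 2 * e) with hK
  intro lam mu hlK hmK u N hs x
  have hK1' : 1 ≤ K := by linarith
  have hl : 0 < lam := by linarith
  have hm : 0 < mu := by nlinarith
  have hlm : 0 < lam * mu := by positivity
  have hlmK : K ≤ lam * mu := by
    have h1 : 1 ≤ lam := by linarith
    have h2 : K ≤ mu := by nlinarith
    nlinarith
  -- the natural length scale of the first equation, below the isolation radius `δ` of the vortices
  have hr : 0 < 1 / √(lam * mu) := by positivity
  have hlr : lam * mu * (1 / √(lam * mu)) ^ 2 = 1 := by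
    rw [div_pow, Real.sq_sqrt hlm.le]; field_simp
  set r := 1 / √(lam * mu)
  have hrδ : r ≤ δ := by
    refine abs_le_of_sq_le_sq' ?_ hδ.le |>.2
    have h1 : 1 / δ ^ 2 ≤ lam * mu := by linarith
    rw [div_le_iff₀ (by positivity)] at h1
    refine le_of_mul_le_mul_left ?_ hlm
    rwa [hlr]
  have hiso' : ∀ i, ∀ q ∈ D.sing, q ∈ closedBall (D.p i) r → q = D.p i :=
    fun i q hq hqr => hiso i q hq (closedBall_subset_closedBall hrδ hqr)
  have hb : ∀ y ∈ closedBall x (θ * (σ * r / 8)), D.expu u y ≤ D.expu u x + e / 2 := by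
    intro y hy
    rw [mem_closedBall, dist_eq_norm] at hy
    have := expu_le_ball hs hl hm hr hlr hiso' hσ (by linarith) hθ (by linarith) hy
    linarith
  have hN := N_le_of_expu_le hs hl hm (by positivity) hb
  have hlow := expu_le_N hs hl hm x
  have hKm : lam / mu ≤ 1 / K := by
    rw [div_le_div_iff₀ hm (by linarith)]; linarith
  have h1 : lam / mu ≤ e / 4 := by
    refine hKm.trans ?_
    have : 4 / e ≤ K := by linarith
    rw [div_le_iff₀ he] at this
    rw [div_le_div_iff₀ (by linarith) (by norm_num)]
    linarith
  have h2 : 4 / (θ * (σ * r / 8) * mu) ^ 2 ≤ e / 4 := by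
    -- `r²μ² = μ/λ`, so this error term is a multiple of `λ/μ`
    have e1 : 4 / (θ * (σ * r / 8) * mu) ^ 2 = 256 / (θ ^ 2 * σ ^ 2) * (lam / mu) := by
      have : (θ * (σ * r / 8) * mu) ^ 2 = θ ^ 2 * σ ^ 2 / 64 * (mu / lam) := by
        have hml : mu / lam = r ^ 2 * mu ^ 2 := by
          rw [div_eq_iff hl.ne']; linear_combination -mu * hlr
        rw [hml]; ring
      rw [this]
      field_simp
      norm_num
    have h3 : 1024 / (θ ^ 2 * σ ^ 2 * e) ≤ K := by linarith
    have h4 : 256 / (θ ^ 2 * σ ^ 2) ≤ K * (e / 4) := by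
      calc 256 / (θ ^ 2 * σ ^ 2) = 1024 / (θ ^ 2 * σ ^ 2 * e) * (e / 4) := by
            field_simp; norm_num
        _ ≤ _ := by gcongr
    rw [e1]
    calc 256 / (θ ^ 2 * σ ^ 2) * (lam / mu) ≤ K * (e / 4) * (1 / K) := by gcongr
      _ = e / 4 := by field_simp
  have hlow' : D.expu u x ≤ N x / lam := by
    rw [le_div_iff₀ hl]; linarith
  rw [abs_le]
  constructor <;> linarith

end
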